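/- The PCF-to-HEPCF translation correctly computes numerals: for every closed PCF term ⊢ C : Nat, letting C_f := let a = ⟦C⟧ in a (), we have ⊢_E C_f : Unit, and the effect tree ET(C_f) is the tree σ(σ(⋯σ(return(()))⋯)) with n occurrences of σ when C evaluates to the numeral n, and ET(C_f) = ⊥ when C diverges. -/

import Mathlib

/-! HEPCF: EPCF extended with effect handlers. A handler consists of a return
clause `Cr` (binding the returned value, de Bruijn index 0) and, for each
operation `σ`, a clause `Hop σ` binding the parameter `x` (index 1) and the
continuation `r` (index 0). -/

namespace HEPCF

mutual
/-- HEPCF values (de Bruijn representation). -/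
inductive HVal (CV Op : Type) : Type
  | cv : CV → HVal CV Op
  | num : ℕ → ℕ → HVal CV Op
  | var : ℕ → HVal CV Op
  | lam : HComp CV Op → HVal CV Op
  | fixv : HVal CV Op → HVal CV Op
/-- HEPCF computations (de Bruijn representation). -/
inductive HComp (CV Op : Type) : Type
  | app : HVal CV Op → HVal CV Op → HComp CV Op
  | ret : HVal CV Op → HComp CV Op
  | letin : HComp CV Op → HComp CV Op → HComp CV Op
  | opc : Op → HVal CV Op → HComp CV Op → HComp CV Op
  | case : (k : ℕ) → HVal CV Op → (Fin k → HComp CV Op) → HComp CV Op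
  | handle : HComp CV Op → (Op → HComp CV Op) → HComp CV Op → HComp CV Op
end

variable {CV Op : Type}

/-- Lifting of a renaming under a binder. -/
def upr (ρ : ℕ → ℕ) : ℕ → ℕ
  | 0 => 0
  | n + 1 => ρ n + 1

mutual
/-- Renaming of variables in values. -/
def renV (ρ : ℕ → ℕ) : HVal CV Op → HVal CV Op
  | .cv v => .cv v
  | .num n k => .num n k
  | .var n => .var (ρ n)
  | .lam C => .lam (renC (upr ρ) C)
  | .fixv V => .fixv (renV (upr ρ) V)
/-- Renaming of variables in computations. -/
def renC (ρ : ℕ → ℕ) : HComp CV Op → HComp CV Op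
  | .app V W => .app (renV ρ V) (renV ρ W)
  | .ret V => .ret (renV ρ V)
  | .letin C B => .letin (renC ρ C) (renC (upr ρ) B)
  | .opc σ V C => .opc σ (renV ρ V) (renC (upr ρ) C)
  | .case k V Cs => .case k (renV ρ V) (fun i => renC ρ (Cs i))
  | .handle Cr Hop C =>
      .handle (renC (upr ρ) Cr) (fun σ => renC (upr (upr ρ)) (Hop σ)) (renC ρ C)
end

/-- Lifting of a substitution under a binder. -/
def upsH (σ : ℕ → HVal CV Op) : ℕ → HVal CV Op
  | 0 => .var 0
  | n + 1 => renV Nat.succ (σ n)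

mutual
/-- Simultaneous substitution of values for variables, in values. -/
def subV (σ : ℕ → HVal CV Op) : HVal CV Op → HVal CV Op
  | .cv v => .cv v
  | .num n k => .num n k
  | .var n => σ n
  | .lam C => .lam (subC (upsH σ) C)
  | .fixv V => .fixv (subV (upsH σ) V)
/-- Simultaneous substitution of values for variables, in computations. -/
def subC (σ : ℕ → HVal CV Op) : HComp CV Op → HComp CV Op
  | .app V W => .app (subV σ V) (subV σ W)
  | .ret V => .ret (subV σ V)
  | .letin C B => .letin (subC σ C) (subC (upsH σ) B)
  | .opc op V C => .opc op (subV σ V) (subC (upsH σ) C)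
  | .case k V Cs => .case k (subV σ V) (fun i => subC σ (Cs i))
  | .handle Cr Hop C =>
      .handle (subC (upsH σ) Cr) (fun op => subC (upsH (upsH σ)) (Hop op))
        (subC σ C)
end

/-- Substitution `C[W/x]` of the value `W` for the variable `0`. -/
def subst0C (W : HVal CV Op) (C : HComp CV Op) : HComp CV Op :=
  subC (fun n => match n with | 0 => W | n + 1 => .var n) C

/-- Substitution `V[W/x]` of the value `W` for the variable `0`. -/
def subst0V (W : HVal CV Op) (V : HVal CV Op) : HVal CV Op :=
  subV (fun n => match n with | 0 => W | n + 1 => .var n) V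

/-- The simultaneous substitution `[r := A, x := B]` used when a handler
catches an operation (`r` is the innermost bound variable). -/
def sub2 (A B : HVal CV Op) : ℕ → HVal CV Op
  | 0 => A
  | 1 => B
  | n + 2 => .var n

/-- The value `λy. handle H C` passed as the captured continuation when the
handler `H = (Cr, Hop)` catches an operation with continuation `C`. -/
def contVal (Cr : HComp CV Op) (Hop : Op → HComp CV Op) (C : HComp CV Op) :
    HVal CV Op :=
  .lam (.handle (renC (upr Nat.succ) Cr)
    (fun σ => renC (upr (upr Nat.succ)) (Hop σ)) C)

/-- The reduction relation of HEPCF. -/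
inductive HStep : HComp CV Op → HComp CV Op → Prop
  | beta (C : HComp CV Op) (W : HVal CV Op) :
      HStep (.app (.lam C) W) (subst0C W C)
  | fix (V W : HVal CV Op) :
      HStep (.app (.fixv V) W) (.app (subst0V (.fixv V) V) W)
  | case {n k : ℕ} (h : n < k) (Cs : Fin k → HComp CV Op) :
      HStep (.case k (.num n k) Cs) (Cs ⟨n, h⟩)
  | letRet (V : HVal CV Op) (C : HComp CV Op) :
      HStep (.letin (.ret V) C) (subst0C V C)
  | letCong {C C' : HComp CV Op} (B : HComp CV Op) :
      HStep C C' → HStep (.letin C B) (.letin C' B)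
  | letOp (σ : Op) (V : HVal CV Op) (C D : HComp CV Op) :
      HStep (.letin (.opc σ V C) D) (.opc σ V (.letin C (renC (upr Nat.succ) D)))
  | hCong {C C' : HComp CV Op} (Cr : HComp CV Op) (Hop : Op → HComp CV Op) :
      HStep C C' → HStep (.handle Cr Hop C) (.handle Cr Hop C')
  | hRet (Cr : HComp CV Op) (Hop : Op → HComp CV Op) (V : HVal CV Op) :
      HStep (.handle Cr Hop (.ret V)) (subst0C V Cr)
  | hOp (Cr : HComp CV Op) (Hop : Op → HComp CV Op) (σ : Op)
      (V : HVal CV Op) (C : HComp CV Op) :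
      HStep (.handle Cr Hop (.opc σ V C))
        (subC (sub2 (contVal Cr Hop C) V) (Hop σ))

end HEPCF

namespace HEPCF

/-- HEPCF types: base types, enumeration types, and effect-annotated arrows
`T →_E U` where `E` is a set of operations. -/
inductive HTy (BV Op : Type) : Type
  | base : BV → HTy BV Op
  | enum : ℕ → HTy BV Op
  | arr : HTy BV Op → Set Op → HTy BV Op → HTy BV Op

section Typing

variable {BV CV Op : Type} (cvTy : CV → BV) (opPar : Op → BV) (opAr : Op → ℕ)

mutual
/-- Typing judgment for HEPCF values. -/
inductive HVTy : List (HTy BV Op) → HVal CV Op → HTy BV Op → Prop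
  | cv {Γ} (v : CV) : HVTy Γ (.cv v) (.base (cvTy v))
  | num {Γ n k} : n < k → HVTy Γ (.num n k) (.enum k)
  | var {Γ n T} : Γ[n]? = some T → HVTy Γ (.var n) T
  | lam {Γ C T E U} : HCTy (T :: Γ) E C U → HVTy Γ (.lam C) (.arr T E U)
  | fixv {Γ V T E U} : HVTy ((HTy.arr T E U) :: Γ) V (.arr T E U) →
      HVTy Γ (.fixv V) (.arr T E U)
/-- Typing judgment `Γ ⊢_E C : T` for HEPCF computations. The rule for
`handle` types the return clause and the clauses for the handled operations
`E'` (the clause for `σᵢ` binds the parameter `x : Bᵢ` and the continuation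
`r : kᵢ →_E T`). -/
inductive HCTy : List (HTy BV Op) → Set Op → HComp CV Op → HTy BV Op → Prop
  | app {Γ E V W T U} : HVTy Γ V (.arr T E U) → HVTy Γ W T →
      HCTy Γ E (.app V W) U
  | ret {Γ E V T} : HVTy Γ V T → HCTy Γ E (.ret V) T
  | letin {Γ E C B T U} : HCTy Γ E C T → HCTy (T :: Γ) E B U →
      HCTy Γ E (.letin C B) U
  | opc {Γ E σ V C T} : σ ∈ E → HVTy Γ V (.base (opPar σ)) →
      HCTy ((HTy.enum (opAr σ)) :: Γ) E C T → HCTy Γ E (.opc σ V C) T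
  | case {Γ E k V T} {Cs : Fin k → HComp CV Op} : HVTy Γ V (.enum k) →
      (∀ i, HCTy Γ E (Cs i) T) → HCTy Γ E (.case k V Cs) T
  | handle {Γ E C Cr Hop T U} {E' : Set Op} :
      HCTy Γ E' C U →
      HCTy (U :: Γ) E Cr T →
      (∀ σ ∈ E',
        HCTy ((HTy.arr (.enum (opAr σ)) E T) :: (HTy.base (opPar σ)) :: Γ)
          E (Hop σ) T) →
      HCTy Γ E (.handle Cr Hop C) T
end

end Typing

end HEPCF

namespace HEPCF

/-- Labels of effect trees of HEPCF computations: operation nodes, parameter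
leaves (constant values), and return leaves. -/
inductive HLab (CV Op : Type) : Type
  | opl : Op → HLab CV Op
  | cvl : CV → HLab CV Op
  | retl : HVal CV Op → HLab CV Op

variable {CV Op : Type}

/-- An HEPCF computation diverges when its reduction never terminates. -/
def HDiverges (C : HComp CV Op) : Prop :=
  ∀ D, Relation.ReflTransGen HStep C D → ∃ D', HStep D D'

/-- The effect tree `ET(C)` of an HEPCF computation, described position by
position: `ETAt opAr C p l` holds when `ET(C)` carries label `l` at
position `p` (`none` standing for `⊥`). An operation `σ : B ⇝ k` is a node
of arity `k+1` whose child `0` is a leaf carrying the parameter. -/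
inductive ETAt (opAr : Op → ℕ) : HComp CV Op → List ℕ → Option (HLab CV Op) → Prop
  | bot {C} : HDiverges C → ETAt opAr C [] none
  | retn {C V} : Relation.ReflTransGen HStep C (.ret V) →
      ETAt opAr C [] (some (.retl V))
  | opHead {C σ V C'} : Relation.ReflTransGen HStep C (.opc σ V C') →
      ETAt opAr C [] (some (.opl σ))
  | opParam {C σ v C'} :
      Relation.ReflTransGen HStep C (.opc σ (.cv v) C') →
      ETAt opAr C [0] (some (.cvl v))
  | opChild {C σ V C' i p l} :
      Relation.ReflTransGen HStep C (.opc σ V C') → i < opAr σ →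
      ETAt opAr (subst0C (.num i (opAr σ)) C') p l →
      ETAt opAr C ((i + 1) :: p) l

end HEPCF

/-! Plotkin's PCF, in fine-grained call-by-value form.
The `case` construct is annotated with the common type of its branches. -/

namespace PCF

/-- PCF types: natural numbers and arrows. -/
inductive PTy : Type
  | nat : PTy
  | arr : PTy → PTy → PTy

mutual
/-- PCF values (de Bruijn representation). -/
inductive PVal : Type
  | zero : PVal
  | succ : PVal → PVal
  | var : ℕ → PVal
  | lam : PComp → PVal
  | fixp : PVal → PVal
/-- PCF computations. `pcase T V C D` is `case(V; 0 ↦ C; succ(n) ↦ D)` where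
`D` binds `n` and both branches have type `T`. -/
inductive PComp : Type
  | app : PVal → PVal → PComp
  | ret : PVal → PComp
  | letin : PComp → PComp → PComp
  | pcase : PTy → PVal → PComp → PComp → PComp
end

/-- Lifting of a renaming under a binder. -/
def upr (ρ : ℕ → ℕ) : ℕ → ℕ
  | 0 => 0
  | n + 1 => ρ n + 1

mutual
/-- Renaming of variables in PCF values. -/
def renV (ρ : ℕ → ℕ) : PVal → PVal
  | .zero => .zero
  | .succ V => .succ (renV ρ V)
  | .var n => .var (ρ n)
  | .lam C => .lam (renC (upr ρ) C)
  | .fixp V => .fixp (renV (upr ρ) V)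
/-- Renaming of variables in PCF computations. -/
def renC (ρ : ℕ → ℕ) : PComp → PComp
  | .app V W => .app (renV ρ V) (renV ρ W)
  | .ret V => .ret (renV ρ V)
  | .letin C B => .letin (renC ρ C) (renC (upr ρ) B)
  | .pcase T V C D => .pcase T (renV ρ V) (renC ρ C) (renC (upr ρ) D)
end

/-- Lifting of a substitution under a binder. -/
def upsP (σ : ℕ → PVal) : ℕ → PVal
  | 0 => .var 0
  | n + 1 => renV Nat.succ (σ n)

mutual
/-- Simultaneous substitution in PCF values. -/
def subV (σ : ℕ → PVal) : PVal → PVal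
  | .zero => .zero
  | .succ V => .succ (subV σ V)
  | .var n => σ n
  | .lam C => .lam (subC (upsP σ) C)
  | .fixp V => .fixp (subV (upsP σ) V)
/-- Simultaneous substitution in PCF computations. -/
def subC (σ : ℕ → PVal) : PComp → PComp
  | .app V W => .app (subV σ V) (subV σ W)
  | .ret V => .ret (subV σ V)
  | .letin C B => .letin (subC σ C) (subC (upsP σ) B)
  | .pcase T V C D => .pcase T (subV σ V) (subC σ C) (subC (upsP σ) D)
end

/-- Substitution of `W` for the variable `0` in a computation. -/
def subst0C (W : PVal) (C : PComp) : PComp :=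
  subC (fun n => match n with | 0 => W | n + 1 => .var n) C

/-- Substitution of `W` for the variable `0` in a value. -/
def subst0V (W : PVal) (V : PVal) : PVal :=
  subV (fun n => match n with | 0 => W | n + 1 => .var n) V

/-- The reduction relation of PCF. -/
inductive PStep : PComp → PComp → Prop
  | beta (C : PComp) (W : PVal) : PStep (.app (.lam C) W) (subst0C W C)
  | fix (V W : PVal) :
      PStep (.app (.fixp V) W) (.app (subst0V (.fixp V) V) W)
  | letRet (V : PVal) (C : PComp) : PStep (.letin (.ret V) C) (subst0C V C)
  | letCong {C C'} (B : PComp) : PStep C C' → PStep (.letin C B) (.letin C' B)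
  | caseZero (T : PTy) (C D : PComp) : PStep (.pcase T .zero C D) C
  | caseSucc (T : PTy) (V : PVal) (C D : PComp) :
      PStep (.pcase T (.succ V) C D) (subst0C V D)

mutual
/-- Typing judgment for PCF values. -/
inductive PVTy : List PTy → PVal → PTy → Prop
  | zero {Γ} : PVTy Γ .zero .nat
  | succ {Γ V} : PVTy Γ V .nat → PVTy Γ (.succ V) .nat
  | var {Γ n T} : Γ[n]? = some T → PVTy Γ (.var n) T
  | lam {Γ C T U} : PCTy (T :: Γ) C U → PVTy Γ (.lam C) (.arr T U)
  | fixp {Γ V T U} : PVTy ((PTy.arr T U) :: Γ) V (.arr T U) →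
      PVTy Γ (.fixp V) (.arr T U)
/-- Typing judgment for PCF computations. -/
inductive PCTy : List PTy → PComp → PTy → Prop
  | app {Γ V W T U} : PVTy Γ V (.arr T U) → PVTy Γ W T →
      PCTy Γ (.app V W) U
  | ret {Γ V T} : PVTy Γ V T → PCTy Γ (.ret V) T
  | letin {Γ C B T U} : PCTy Γ C T → PCTy (T :: Γ) B U →
      PCTy Γ (.letin C B) U
  | pcase {Γ V C D T} : PVTy Γ V .nat → PCTy Γ C T →
      PCTy (PTy.nat :: Γ) D T → PCTy Γ (.pcase T V C D) T
end

/-- The PCF numeral `n`. -/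
def pnum : ℕ → PVal
  | 0 => .zero
  | n + 1 => .succ (pnum n)

end PCF

/-! The translation from PCF to (finitary) HEPCF. The HEPCF signature has a
single base type `Unit` (with single constant value `()`), and the single
operation `σ : Unit ⇝ 1`, so `CV = BV = Op = Unit`, `opAr = 1`. A natural
number `n` is represented by a thunk performing the effect `σ` exactly `n`
times and then returning `()`. -/

namespace P2H

open PCF HEPCF

/-- The base-type assignment of the signature: the only constant `()` has
type `Unit`. -/
def cvTyU : Unit → Unit := fun _ => ()

/-- The parameter type of the single operation `σ : Unit ⇝ 1`. -/
def opParU : Unit → Unit := fun _ => ()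

/-- The arity of the single operation `σ : Unit ⇝ 1`. -/
def opArU : Unit → ℕ := fun _ => 1

/-- The effect set `E = {σ : Unit ⇝ 1}` (all operations of the signature). -/
def EU : Set Unit := Set.univ

/-- Translation of PCF types: `⟦Nat⟧ = Unit →_E Unit`,
`⟦T → U⟧ = ⟦T⟧ →_E ⟦U⟧`. -/
def trTy : PTy → HTy Unit Unit
  | .nat => .arr (.base ()) EU (.base ())
  | .arr T U => .arr (trTy T) EU (trTy U)

/-- The zero value `Z_T` of an HEPCF type. -/
def Z : HTy Unit Unit → HVal Unit Unit
  | .base _ => .cv ()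
  | .enum k => .num 0 k
  | .arr _ _ U => .lam (.ret (Z U))

/-- The value `λf,g. g ()` selecting the second component of an encoded pair
of thunks. -/
def sndSel : HVal Unit Unit :=
  .lam (.ret (.lam (.app (.var 0) (.cv ()))))

/-- The zero value `Z_{Unit → Unit}`. -/
def ZUU : HVal Unit Unit := .lam (.ret (.cv ()))

/-- The return clause of the handler `H(C,D)`:
`return(V) ↦ return(λp. p Z_{Unit→Unit} (λx.⟦C⟧))` (given `⟦C⟧`). -/
def retClause (tC : HComp Unit Unit) : HComp Unit Unit :=
  .ret (.lam (.letin (.app (.var 0) ZUU)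
    (.app (.var 0) (.lam (renC (· + 4) tC)))))

/-- The `σ` clause of the handler `H(C,D)` (given `⟦D⟧` and the type `T` of
the branches):
`σ(r) ↦ let n = return(λx. let y = r 0̲ (λf,g. let z = f () in Z_{⟦T⟧})
               in return(Z_Unit))
        in return(λp. p (λx. σ(z. n ())) (λx. ⟦D⟧))`. -/
def sigClause (T : PTy) (tD : HComp Unit Unit) : HComp Unit Unit :=
  .letin
    (.ret (.lam
      (.letin
        (.letin (.app (.var 1) (.num 0 1))
          (.app (.var 0)
            (.lam (.ret (.lam
              (.letin (.app (.var 1) (.cv ())) (.ret (Z (trTy T)))))))))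
        (.ret (.cv ())))))
    (.ret (.lam
      (.letin (.app (.var 0) (.lam (.opc () (.cv ()) (.app (.var 3) (.cv ())))))
        (.app (.var 0)
          (.lam (renC (fun m => match m with | 0 => 3 | m + 1 => m + 6) tD))))))

mutual
/-- Translation of PCF values into HEPCF. -/
def trV : PVal → HVal Unit Unit
  | .zero => .lam (.ret (.cv ()))
  | .succ V => .lam (.opc () (.cv ()) (.app (renV (· + 2) (trV V)) (.cv ())))
  | .var n => .var n
  | .lam C => .lam (trC C)
  | .fixp V => .fixv (trV V)
/-- Translation of PCF computations into HEPCF. The `case` construct is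
translated as
`⟦case(V;0↦C;succ(n)↦D)⟧ = let a = (handle H(C,D) (⟦V⟧ ())) in a (λf,g. g ())`. -/
def trC : PComp → HComp Unit Unit
  | .app V W => .app (trV V) (trV W)
  | .ret V => .ret (trV V)
  | .letin C B => .letin (trC C) (trC B)
  | .pcase T V C D =>
      .letin
        (.handle (retClause (trC C)) (fun _ => sigClause T (trC D))
          (.app (trV V) (.cv ())))
        (.app (.var 0) sndSel)
end

end P2H

namespace P2H

open PCF HEPCF

/-- A PCF computation diverges when its reduction never terminates. -/
def PDiverges (C : PComp) : Prop :=
  ∀ D, Relation.ReflTransGen PStep C D → ∃ D', PStep D D'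

/-- The effect tree `σ(σ(⋯σ(return(()))⋯))` with `n` occurrences of `σ`,
described position by position (each `σ` node has the parameter leaf `()` as
child `0` and its continuation as child `1`). -/
def numTreeAt (n : ℕ) (p : List ℕ) (l : Option (HLab Unit Unit)) : Prop :=
  (∃ m, m < n ∧ p = List.replicate m 1 ∧ l = some (.opl ())) ∨
  (∃ m, m < n ∧ p = List.replicate m 1 ++ [0] ∧ l = some (.cvl ())) ∨
  (p = List.replicate n 1 ∧ l = some (.retl (.cv ())))

/-- The HEPCF computation `C_f = let a = ⟦C⟧ in a ()` associated with a
closed PCF computation `C` of type `Nat`. -/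
def Cf (C : PComp) : HComp Unit Unit :=
  .letin (trC C) (.app (.var 0) (.cv ()))

end P2H

/-! A deterministic machine that answers every step of a source machine with at least one step of
its own inherits divergence from the source, so it suffices to find such a simulation of PCF in
HEPCF. The translation itself is not one: taking the predecessor of `⟦succ V⟧` yields not `⟦V⟧` but
a thunk that replays the captured continuation of `σ` under the handler. Such a thunk still
performs `σ` as often as `⟦V⟧` does, so we relate to a closed numeral every closed thunk with the
right number of effects, and otherwise follow the translation. -/

section Simulation

open Relation

variable {α β : Type*} {r : α → α → Prop} {s : β → β → Prop} {R : α → β → Prop}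

/-- `R` is a forward simulation of `r` by `s`: from related states, every `r`-step is answered by
one or more `s`-steps leading to related states again. Demanding at least one step makes divergence
carry over. -/
def ForwardSimulation (r : α → α → Prop) (s : β → β → Prop) (R : α → β → Prop) : Prop :=
  ∀ ⦃a b a'⦄, R a b → r a a' → ∃ b', TransGen s b b' ∧ R a' b'

theorem ForwardSimulation.reflTransGen (h : ForwardSimulation r s R) {a a' : α} {b : β}
    (hab : R a b) (ha : ReflTransGen r a a') : ∃ b', ReflTransGen s b b' ∧ R a' b' := by
  induction ha with
  | refl => exact ⟨b, .refl, hab⟩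
  | tail _ hstep ih =>
    obtain ⟨b₁, hb₁, hR₁⟩ := ih
    obtain ⟨b₂, hb₂, hR₂⟩ := h hR₁ hstep
    exact ⟨b₂, hb₁.trans hb₂.to_reflTransGen, hR₂⟩

theorem ForwardSimulation.diverges (h : ForwardSimulation r s R) (hs : Relator.RightUnique s)
    {a : α} {b : β} (hab : R a b) (ha : ∀ a', ReflTransGen r a a' → ∃ a'', r a' a'') :
    ∀ b', ReflTransGen s b b' → ∃ b'', s b' b'' := by
  have advance {b'} (hb' : ∃ a₁ b₁, ReflTransGen r a a₁ ∧ R a₁ b₁ ∧ ReflTransGen s b' b₁) :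
      ∃ a₂ b₂, ReflTransGen r a a₂ ∧ R a₂ b₂ ∧ TransGen s b' b₂ := by
    obtain ⟨a₁, b₁, ha₁, hR₁, hb₁⟩ := hb'
    obtain ⟨a₂, ha₂⟩ := ha a₁ ha₁
    obtain ⟨b₂, hb₂, hR₂⟩ := h hR₁ ha₂
    exact ⟨a₂, b₂, ha₁.tail ha₂, hR₂, hb₂.trans_right hb₁⟩
  intro b' hb'
  have reach : ∃ a₁ b₁, ReflTransGen r a a₁ ∧ R a₁ b₁ ∧ ReflTransGen s b' b₁ := by
    induction hb' with
    | refl => exact ⟨a, b, .refl, hab, .refl⟩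
    | tail _ hstep ih =>
      obtain ⟨a₂, b₂, ha₂, hR₂, hb₂⟩ := advance ih
      obtain ⟨c, hc, hcb₂⟩ := TransGen.head'_iff.1 hb₂
      exact ⟨a₂, b₂, ha₂, hR₂, hs hc hstep ▸ hcb₂⟩
  obtain ⟨_, _, _, _, hb₂⟩ := advance reach
  obtain ⟨c, hc, _⟩ := TransGen.head'_iff.1 hb₂
  exact ⟨c, hc⟩

theorem eq_of_reflTransGen_of_normal (hr : Relator.RightUnique r) {a b c : α}
    (hb : ∀ d, ¬ r b d) (hc : ∀ d, ¬ r c d) (hab : ReflTransGen r a b)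
    (hac : ReflTransGen r a c) : b = c := by
  rcases ReflTransGen.total_of_right_unique hr hab hac with h | h
  · exact ((reflTransGen_iff_eq hb).1 h).symm
  · exact (reflTransGen_iff_eq hc).1 h

end Simulation

namespace HEPCF

variable {BV CV Op : Type}

/-! ### Substitution calculus -/

theorem upsH_var : upsH (.var : ℕ → HVal CV Op) = .var := by
  funext n; cases n <;> rfl

theorem upsH_var_comp (ρ : ℕ → ℕ) :
    upsH (fun n => (.var (ρ n) : HVal CV Op)) = fun n => .var (upr ρ n) := by
  funext n; cases n <;> rfl

theorem upsH_comp_upr (σ : ℕ → HVal CV Op) (ρ : ℕ → ℕ) : upsH σ ∘ upr ρ = upsH (σ ∘ ρ) := by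
  funext n; cases n <;> rfl

mutual
theorem renV_eq_subV : ∀ (V : HVal CV Op) (ρ : ℕ → ℕ), renV ρ V = subV (fun n => .var (ρ n)) V
  | .cv _, _ => by simp [renV, subV]
  | .num _ _, _ => by simp [renV, subV]
  | .var _, _ => by simp [renV, subV]
  | .lam C, _ => by simp [renV, subV, upsH_var_comp, renC_eq_subC C]
  | .fixv V, _ => by simp [renV, subV, upsH_var_comp, renV_eq_subV V]
theorem renC_eq_subC : ∀ (C : HComp CV Op) (ρ : ℕ → ℕ), renC ρ C = subC (fun n => .var (ρ n)) C
  | .app V W, _ => by simp [renC, subC, renV_eq_subV V, renV_eq_subV W]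
  | .ret V, _ => by simp [renC, subC, renV_eq_subV V]
  | .letin C B, _ => by simp [renC, subC, upsH_var_comp, renC_eq_subC C, renC_eq_subC B]
  | .opc _ V C, _ => by simp [renC, subC, upsH_var_comp, renV_eq_subV V, renC_eq_subC C]
  | .case _ V Cs, _ => by simp [renC, subC, renV_eq_subV V, fun i => renC_eq_subC (Cs i)]
  | .handle Cr Hop C, _ => by
      simp [renC, subC, upsH_var_comp, renC_eq_subC Cr, fun op => renC_eq_subC (Hop op),
        renC_eq_subC C]
end

mutual
theorem subV_renV : ∀ (V : HVal CV Op) (σ : ℕ → HVal CV Op) (ρ : ℕ → ℕ),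
    subV σ (renV ρ V) = subV (σ ∘ ρ) V
  | .cv _, _, _ => by simp [renV, subV]
  | .num _ _, _, _ => by simp [renV, subV]
  | .var _, _, _ => by simp [renV, subV]
  | .lam C, _, _ => by simp [renV, subV, upsH_comp_upr, subC_renC C]
  | .fixv V, _, _ => by simp [renV, subV, upsH_comp_upr, subV_renV V]
theorem subC_renC : ∀ (C : HComp CV Op) (σ : ℕ → HVal CV Op) (ρ : ℕ → ℕ),
    subC σ (renC ρ C) = subC (σ ∘ ρ) C
  | .app V W, _, _ => by simp [renC, subC, subV_renV V, subV_renV W]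
  | .ret V, _, _ => by simp [renC, subC, subV_renV V]
  | .letin C B, _, _ => by simp [renC, subC, upsH_comp_upr, subC_renC C, subC_renC B]
  | .opc _ V C, _, _ => by simp [renC, subC, upsH_comp_upr, subV_renV V, subC_renC C]
  | .case _ V Cs, _, _ => by simp [renC, subC, subV_renV V, fun i => subC_renC (Cs i)]
  | .handle Cr Hop C, _, _ => by
      simp [renC, subC, upsH_comp_upr, subC_renC Cr, fun op => subC_renC (Hop op), subC_renC C]
end

theorem renV_renV (V : HVal CV Op) (ρ ρ' : ℕ → ℕ) : renV ρ (renV ρ' V) = renV (ρ ∘ ρ') V := by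
  rw [renV_eq_subV _ ρ, subV_renV, renV_eq_subV]; rfl

theorem renV_upr_upsH (σ : ℕ → HVal CV Op) (ρ : ℕ → ℕ) :
    (fun n => renV (upr ρ) (upsH σ n)) = upsH (fun n => renV ρ (σ n)) := by
  funext n
  cases n with
  | zero => rfl
  | succ n => simp only [upsH, renV_renV]; rfl

mutual
theorem renV_subV : ∀ (V : HVal CV Op) (σ : ℕ → HVal CV Op) (ρ : ℕ → ℕ),
    renV ρ (subV σ V) = subV (fun n => renV ρ (σ n)) V
  | .cv _, _, _ => by simp [renV, subV]
  | .num _ _, _, _ => by simp [renV, subV]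
  | .var _, _, _ => by simp [subV]
  | .lam C, _, _ => by simp [renV, subV, renV_upr_upsH, renC_subC C]
  | .fixv V, _, _ => by simp [renV, subV, renV_upr_upsH, renV_subV V]
theorem renC_subC : ∀ (C : HComp CV Op) (σ : ℕ → HVal CV Op) (ρ : ℕ → ℕ),
    renC ρ (subC σ C) = subC (fun n => renV ρ (σ n)) C
  | .app V W, _, _ => by simp [renC, subC, renV_subV V, renV_subV W]
  | .ret V, _, _ => by simp [renC, subC, renV_subV V]
  | .letin C B, _, _ => by simp [renC, subC, renV_upr_upsH, renC_subC C, renC_subC B]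
  | .opc _ V C, _, _ => by simp [renC, subC, renV_upr_upsH, renV_subV V, renC_subC C]
  | .case _ V Cs, _, _ => by simp [renC, subC, renV_subV V, fun i => renC_subC (Cs i)]
  | .handle Cr Hop C, _, _ => by
      simp [renC, subC, renV_upr_upsH, renC_subC Cr, fun op => renC_subC (Hop op), renC_subC C]
end

theorem subV_upsH_upsH (σ τ : ℕ → HVal CV Op) :
    (fun n => subV (upsH σ) (upsH τ n)) = upsH (fun n => subV σ (τ n)) := by
  funext n
  cases n with
  | zero => simp only [upsH, subV]
  | succ n => simp only [upsH, subV_renV, renV_subV]; rfl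

mutual
theorem subV_subV : ∀ (V : HVal CV Op) (σ τ : ℕ → HVal CV Op),
    subV σ (subV τ V) = subV (fun n => subV σ (τ n)) V
  | .cv _, _, _ => by simp [subV]
  | .num _ _, _, _ => by simp [subV]
  | .var _, _, _ => by simp [subV]
  | .lam C, _, _ => by simp [subV, subV_upsH_upsH, subC_subC C]
  | .fixv V, _, _ => by simp [subV, subV_upsH_upsH, subV_subV V]
theorem subC_subC : ∀ (C : HComp CV Op) (σ τ : ℕ → HVal CV Op),
    subC σ (subC τ C) = subC (fun n => subV σ (τ n)) C
  | .app V W, _, _ => by simp [subC, subV_subV V, subV_subV W]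
  | .ret V, _, _ => by simp [subC, subV_subV V]
  | .letin C B, _, _ => by simp [subC, subV_upsH_upsH, subC_subC C, subC_subC B]
  | .opc _ V C, _, _ => by simp [subC, subV_upsH_upsH, subV_subV V, subC_subC C]
  | .case _ V Cs, _, _ => by simp [subC, subV_subV V, fun i => subC_subC (Cs i)]
  | .handle Cr Hop C, _, _ => by
      simp [subC, subV_upsH_upsH, subC_subC Cr, fun op => subC_subC (Hop op), subC_subC C]
end

mutual
theorem subV_var : ∀ V : HVal CV Op, subV .var V = V
  | .cv _ => by simp [subV]
  | .num _ _ => by simp [subV]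
  | .var _ => by simp [subV]
  | .lam C => by simp [subV, upsH_var, subC_var C]
  | .fixv V => by simp [subV, upsH_var, subV_var V]
theorem subC_var : ∀ C : HComp CV Op, subC .var C = C
  | .app V W => by simp [subC, subV_var V, subV_var W]
  | .ret V => by simp [subC, subV_var V]
  | .letin C B => by simp [subC, upsH_var, subC_var C, subC_var B]
  | .opc _ V C => by simp [subC, upsH_var, subV_var V, subC_var C]
  | .case _ V Cs => by simp [subC, subV_var V, fun i => subC_var (Cs i)]
  | .handle Cr Hop C => by
      simp [subC, upsH_var, subC_var Cr, fun op => subC_var (Hop op), subC_var C]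
end

theorem subC_subst0C (τ : ℕ → HVal CV Op) (W : HVal CV Op) (C : HComp CV Op) :
    subC τ (subst0C W C) = subst0C (subV τ W) (subC (upsH τ) C) := by
  unfold subst0C
  rw [subC_subC, subC_subC]
  congr 1; funext n
  cases n with
  | zero => simp only [upsH, subV]
  | succ n => simp only [upsH, subV, subV_renV]; exact (subV_var _).symm

theorem subV_subst0V (τ : ℕ → HVal CV Op) (W V : HVal CV Op) :
    subV τ (subst0V W V) = subst0V (subV τ W) (subV (upsH τ) V) := by
  unfold subst0V
  rw [subV_subV, subV_subV]
  congr 1; funext n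
  cases n with
  | zero => simp only [upsH, subV]
  | succ n => simp only [upsH, subV, subV_renV]; exact (subV_var _).symm

theorem subC_sub2 (τ : ℕ → HVal CV Op) (A B : HVal CV Op) (C : HComp CV Op) :
    subC τ (subC (sub2 A B) C) =
      subC (sub2 (subV τ A) (subV τ B)) (subC (upsH (upsH τ)) C) := by
  rw [subC_subC, subC_subC]
  congr 1; funext n
  rcases n with _ | _ | n
  · simp only [upsH, subV, sub2]
  · simp only [upsH, subV, sub2, renV]
  · simp only [upsH, subV, subV_renV, sub2]; exact (subV_var _).symm

theorem subC_renC_upr_succ (τ : ℕ → HVal CV Op) (C : HComp CV Op) :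
    subC (upsH (upsH τ)) (renC (upr Nat.succ) C) = renC (upr Nat.succ) (subC (upsH τ) C) := by
  rw [subC_renC, renC_subC, upsH_comp_upr, renV_upr_upsH]; rfl

theorem subC_renC_upr_upr_succ (τ : ℕ → HVal CV Op) (C : HComp CV Op) :
    subC (upsH (upsH (upsH τ))) (renC (upr (upr Nat.succ)) C) =
      renC (upr (upr Nat.succ)) (subC (upsH (upsH τ)) C) := by
  rw [subC_renC, renC_subC, upsH_comp_upr, upsH_comp_upr, renV_upr_upsH, renV_upr_upsH]; rfl

theorem subV_contVal (τ : ℕ → HVal CV Op) (Cr : HComp CV Op) (Hop : Op → HComp CV Op)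
    (C : HComp CV Op) :
    subV τ (contVal Cr Hop C) =
      contVal (subC (upsH τ) Cr) (fun op => subC (upsH (upsH τ)) (Hop op)) (subC (upsH τ) C) := by
  simp only [contVal, subV, subC, subC_renC_upr_succ, subC_renC_upr_upr_succ]

/-! ### Reduction -/

/-- Evaluation of HEPCF computations: zero or more reduction steps. -/
abbrev HSteps : HComp CV Op → HComp CV Op → Prop := Relation.ReflTransGen HStep

/-- One or more reduction steps between HEPCF computations. -/
abbrev HStepsPlus : HComp CV Op → HComp CV Op → Prop := Relation.TransGen HStep

theorem HStep.subC {C D : HComp CV Op} (h : HStep C D) (τ : ℕ → HVal CV Op) :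
    HStep (subC τ C) (subC τ D) := by
  induction h with
  | beta => simp only [subC_subst0C, HEPCF.subC, subV]; exact .beta _ _
  | fix => simp only [subV_subst0V, HEPCF.subC, subV]; exact .fix _ _
  | case h Cs => simp only [HEPCF.subC, subV]; exact .case h fun i => HEPCF.subC τ (Cs i)
  | letRet => simp only [subC_subst0C, HEPCF.subC]; exact .letRet _ _
  | letCong _ _ ih => simp only [HEPCF.subC]; exact .letCong _ ih
  | letOp => simp only [HEPCF.subC, subC_renC_upr_succ]; exact .letOp _ _ _ _
  | hCong _ _ _ ih => simp only [HEPCF.subC]; exact .hCong _ _ ih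
  | hRet => simp only [subC_subst0C, HEPCF.subC]; exact .hRet _ _ _
  | hOp _ Hop =>
    simp only [subC_sub2, subV_contVal, HEPCF.subC]
    exact .hOp _ (fun op => HEPCF.subC (upsH (upsH τ)) (Hop op)) _ _ _

theorem not_hStep_ret (V : HVal CV Op) (D : HComp CV Op) : ¬ HStep (.ret V) D := nofun

theorem not_hStep_opc (σ : Op) (V : HVal CV Op) (C D : HComp CV Op) :
    ¬ HStep (.opc σ V C) D := nofun

theorem HStep.rightUnique : Relator.RightUnique (HStep : HComp CV Op → HComp CV Op → Prop) := by
  intro C D D' h h'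
  induction h generalizing D' with
  | beta | fix | case => cases h'; rfl
  | letRet =>
    cases h' with
    | letRet => rfl
    | letCong _ h => cases h
  | letCong _ h ih =>
    cases h' with
    | letCong _ h' => rw [ih h']
    | letRet | letOp => cases h
  | letOp =>
    cases h' with
    | letCong _ h => cases h
    | letOp => rfl
  | hCong _ _ h ih =>
    cases h' with
    | hCong _ _ h' => rw [ih h']
    | hRet | hOp => cases h
  | hRet =>
    cases h' with
    | hCong _ _ h => cases h
    | hRet => rfl
  | hOp =>
    cases h' with
    | hCong _ _ h => cases h
    | hOp => rfl

theorem HStep.beta_of_eq {C D : HComp CV Op} {W : HVal CV Op} (h : subst0C W C = D) :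
    HStep (.app (.lam C) W) D :=
  h ▸ .beta C W

theorem HStep.letRet_of_eq {C D : HComp CV Op} {V : HVal CV Op} (h : subst0C V C = D) :
    HStep (.letin (.ret V) C) D :=
  h ▸ .letRet V C

theorem letin_steps {C D : HComp CV Op} (B : HComp CV Op) (h : HSteps C D) :
    HSteps (.letin C B) (.letin D B) :=
  h.lift (HComp.letin · B) fun _ _ => .letCong B

theorem handle_steps {C D : HComp CV Op} (Cr : HComp CV Op) (Hop : Op → HComp CV Op)
    (h : HSteps C D) : HSteps (.handle Cr Hop C) (.handle Cr Hop D) :=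
  h.lift (HComp.handle Cr Hop) fun _ _ => .hCong Cr Hop

theorem HDiverges.letin {C : HComp CV Op} (h : HDiverges C) (B : HComp CV Op) :
    HDiverges (.letin C B) := by
  intro D hD
  have shape : ∃ C', HSteps C C' ∧ D = .letin C' B := by
    induction hD with
    | refl => exact ⟨C, .refl, rfl⟩
    | tail _ hstep ih =>
      obtain ⟨C', hC', rfl⟩ := ih
      cases hstep with
      | letCong _ h' => exact ⟨_, hC'.tail h', rfl⟩
      | letRet => exact absurd (h _ hC').choose_spec (not_hStep_ret _ _)
      | letOp => exact absurd (h _ hC').choose_spec (not_hStep_opc _ _ _ _)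
  obtain ⟨C', hC', rfl⟩ := shape
  obtain ⟨C'', hC''⟩ := h C' hC'
  exact ⟨_, .letCong B hC''⟩

/-! ### Scoping -/

/-- The free variables of the value `V` are among `0, …, k - 1`. This is phrased through
substitution, so that stability under reduction comes from that of `HStep` under substitution
rather than from an induction on syntax. -/
def ScopedV (k : ℕ) (V : HVal CV Op) : Prop :=
  ∀ σ τ : ℕ → HVal CV Op, (∀ i < k, σ i = τ i) → subV σ V = subV τ V

/-- The free variables of the computation `C` are among `0, …, k - 1`; see `ScopedV`. -/
def ScopedC (k : ℕ) (C : HComp CV Op) : Prop :=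
  ∀ σ τ : ℕ → HVal CV Op, (∀ i < k, σ i = τ i) → subC σ C = subC τ C

section Scoping

variable {k m : ℕ} {V W : HVal CV Op} {B C D : HComp CV Op} {Hop : Op → HComp CV Op}

theorem upsH_congr {σ τ : ℕ → HVal CV Op} (h : ∀ i < k, σ i = τ i) :
    ∀ i < k + 1, upsH σ i = upsH τ i
  | 0, _ => rfl
  | i + 1, hi => congrArg (renV Nat.succ) (h i (by omega))

theorem ScopedV.cv (v : CV) : ScopedV k (.cv v : HVal CV Op) := by
  intro σ τ _; simp only [subV]

theorem ScopedV.num (i j : ℕ) : ScopedV k (.num i j : HVal CV Op) := by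
  intro σ τ _; simp only [subV]

theorem ScopedV.var {i : ℕ} (hi : i < k) : ScopedV k (.var i : HVal CV Op) := by
  intro σ τ h; simpa only [subV] using h i hi

theorem ScopedV.lam (hC : ScopedC (k + 1) C) : ScopedV k (.lam C) := by
  intro σ τ h; simp only [subV, hC _ _ (upsH_congr h)]

theorem ScopedV.fixv (hV : ScopedV (k + 1) V) : ScopedV k (.fixv V) := by
  intro σ τ h; simp only [subV, hV _ _ (upsH_congr h)]

theorem ScopedC.app (hV : ScopedV k V) (hW : ScopedV k W) : ScopedC k (.app V W) := by
  intro σ τ h; simp only [subC, hV _ _ h, hW _ _ h]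

theorem ScopedC.ret (hV : ScopedV k V) : ScopedC k (.ret V) := by
  intro σ τ h; simp only [subC, hV _ _ h]

theorem ScopedC.letin (hC : ScopedC k C) (hB : ScopedC (k + 1) B) : ScopedC k (.letin C B) := by
  intro σ τ h; simp only [subC, hC _ _ h, hB _ _ (upsH_congr h)]

theorem ScopedC.opc {op : Op} (hV : ScopedV k V) (hC : ScopedC (k + 1) C) :
    ScopedC k (.opc op V C) := by
  intro σ τ h; simp only [subC, hV _ _ h, hC _ _ (upsH_congr h)]

theorem ScopedC.handle (hB : ScopedC (k + 1) B) (hHop : ∀ op, ScopedC (k + 2) (Hop op))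
    (hC : ScopedC k C) : ScopedC k (.handle B Hop C) := by
  intro σ τ h
  simp only [subC, hB _ _ (upsH_congr h), fun op => hHop op _ _ (upsH_congr (upsH_congr h)),
    hC _ _ h]

theorem ScopedV.renV {ρ : ℕ → ℕ} (hV : ScopedV k V) (hρ : ∀ i < k, ρ i < m) :
    ScopedV m (renV ρ V) := by
  intro σ τ h; rw [subV_renV, subV_renV]; exact hV _ _ fun i hi => h _ (hρ i hi)

theorem ScopedC.renC {ρ : ℕ → ℕ} (hC : ScopedC k C) (hρ : ∀ i < k, ρ i < m) :
    ScopedC m (renC ρ C) := by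
  intro σ τ h; rw [subC_renC, subC_renC]; exact hC _ _ fun i hi => h _ (hρ i hi)

theorem ScopedV.mono (hV : ScopedV k V) (hkm : k ≤ m) : ScopedV m V :=
  fun σ τ h => hV σ τ fun i hi => h i (hi.trans_le hkm)

theorem ScopedC.mono (hC : ScopedC k C) (hkm : k ≤ m) : ScopedC m C :=
  fun σ τ h => hC σ τ fun i hi => h i (hi.trans_le hkm)

theorem ScopedC.subC_eq_self (hC : ScopedC k C) {σ : ℕ → HVal CV Op} (h : ∀ i < k, σ i = .var i) :
    subC σ C = C := by
  rw [hC σ .var h, subC_var]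

theorem ScopedC.renC_eq_self (hC : ScopedC k C) {ρ : ℕ → ℕ} (h : ∀ i < k, ρ i = i) :
    HEPCF.renC ρ C = C := by
  rw [renC_eq_subC]; exact hC.subC_eq_self fun i hi => congrArg _ (h i hi)

theorem ScopedV.subV_closed (hV : ScopedV 0 V) (σ : ℕ → HVal CV Op) : subV σ V = V := by
  rw [hV σ .var nofun, subV_var]

theorem ScopedV.renV_closed (hV : ScopedV 0 V) (ρ : ℕ → ℕ) : HEPCF.renV ρ V = V := by
  rw [renV_eq_subV, hV.subV_closed]

theorem ScopedC.subC_closed (hC : ScopedC 0 C) (σ : ℕ → HVal CV Op) : subC σ C = C :=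
  hC.subC_eq_self nofun

theorem ScopedC.renC_closed (hC : ScopedC 0 C) (ρ : ℕ → ℕ) : HEPCF.renC ρ C = C :=
  hC.renC_eq_self nofun

theorem ScopedC.of_subC_eq_self (h : ∀ σ, subC σ C = C) : ScopedC 0 C :=
  fun σ τ _ => (h σ).trans (h τ).symm

theorem ScopedC.subst0C (hC : ScopedC 1 C) (hW : ScopedV 0 W) : ScopedC 0 (subst0C W C) := by
  refine .of_subC_eq_self fun σ => ?_
  have hup : subC (upsH σ) C = C := hC.subC_eq_self (by rintro (_ | i) hi <;> [rfl; omega])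
  rw [subC_subst0C, hW.subV_closed, hup]

theorem ScopedC.opc_body {op : Op} (h : ScopedC 0 (.opc op V C)) : ScopedC 1 C := by
  have hself (σ : ℕ → HVal CV Op) : subC (upsH σ) C = C := by
    have := h.subC_closed σ
    simp only [subC, HComp.opc.injEq] at this
    exact this.2.2
  intro σ τ hστ
  rw [← hself fun _ => .num 0 0, subC_subC, subC_subC]
  congr 1; funext n
  cases n with
  | zero => simpa only [upsH, subV] using hστ 0 one_pos
  | succ n => simp only [upsH, renV, subV]

theorem ScopedC.reflTransGen (hC : ScopedC 0 C) (h : HSteps C D) : ScopedC 0 D := by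
  induction h with
  | refl => exact hC
  | tail _ hstep ih =>
    refine .of_subC_eq_self fun σ => ?_
    have hstep' := hstep.subC σ
    rw [ih.subC_closed σ] at hstep'
    exact HStep.rightUnique hstep' hstep

section ClosedHandler

variable (hB : ScopedC 1 B) (hHop : ∀ op, ScopedC 2 (Hop op))
include hB hHop

theorem subC_handle_of_scoped (σ : ℕ → HVal CV Op) :
    subC σ (.handle B Hop C) = .handle B Hop (subC σ C) := by
  have hB' : subC (upsH σ) B = B := hB.subC_eq_self (by rintro (_ | i) hi <;> [rfl; omega])
  have hHop' (op) : subC (upsH (upsH σ)) (Hop op) = Hop op :=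
    (hHop op).subC_eq_self (by rintro (_ | _ | i) hi <;> [rfl; rfl; omega])
  simp only [subC, hB', hHop']

theorem contVal_of_scoped : contVal B Hop C = .lam (.handle B Hop C) := by
  have hB' : renC (upr Nat.succ) B = B := hB.renC_eq_self (by rintro (_ | i) hi <;> [rfl; omega])
  have hHop' (op) : renC (upr (upr Nat.succ)) (Hop op) = Hop op :=
    (hHop op).renC_eq_self (by rintro (_ | _ | i) hi <;> [rfl; rfl; omega])
  simp only [contVal, hB', hHop']

end ClosedHandler

end Scoping

/-! ### Effect trees -/

section EffectTree

variable {opAr : Op → ℕ} {C C' : HComp CV Op} {V : HVal CV Op} {σ : Op} {p : List ℕ}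
  {l : Option (HLab CV Op)}

theorem etAt_iff_of_hDiverges (h : HDiverges C) : ETAt opAr C p l ↔ p = [] ∧ l = none := by
  refine ⟨fun hl => ?_, fun ⟨hp, hl⟩ => hp ▸ hl ▸ .bot h⟩
  cases hl with
  | bot => exact ⟨rfl, rfl⟩
  | retn h' => exact absurd (h _ h').choose_spec (not_hStep_ret _ _)
  | opHead h' | opParam h' | opChild h' =>
    exact absurd (h _ h').choose_spec (not_hStep_opc _ _ _ _)

theorem etAt_iff_of_steps_ret (h : HSteps C (.ret V)) :
    ETAt opAr C p l ↔ p = [] ∧ l = some (.retl V) := by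
  have uniq {D : HComp CV Op} (hD : ∀ D', ¬ HStep D D') (hCD : HSteps C D) : .ret V = D :=
    eq_of_reflTransGen_of_normal HStep.rightUnique (not_hStep_ret V) hD h hCD
  refine ⟨fun hl => ?_, fun ⟨hp, hl⟩ => hp ▸ hl ▸ .retn h⟩
  cases hl with
  | bot hdiv => exact absurd (hdiv _ h).choose_spec (not_hStep_ret _ _)
  | retn h' =>
    cases uniq (not_hStep_ret _) h'
    exact ⟨rfl, rfl⟩
  | opHead h' | opParam h' | opChild h' => cases uniq (not_hStep_opc _ _ _) h'

theorem etAt_iff_of_steps_opc (h : HSteps C (.opc σ V C')) :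
    ETAt opAr C p l ↔ (p = [] ∧ l = some (.opl σ)) ∨
      (∃ v, V = .cv v ∧ p = [0] ∧ l = some (.cvl v)) ∨
      ∃ i q, i < opAr σ ∧ p = (i + 1) :: q ∧ ETAt opAr (subst0C (.num i (opAr σ)) C') q l := by
  have uniq {D : HComp CV Op} (hD : ∀ D', ¬ HStep D D') (hCD : HSteps C D) : .opc σ V C' = D :=
    eq_of_reflTransGen_of_normal HStep.rightUnique (not_hStep_opc σ V C') hD h hCD
  constructor
  · intro hl
    cases hl with
    | bot hdiv => exact absurd (hdiv _ h).choose_spec (not_hStep_opc _ _ _ _)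
    | retn h' => cases uniq (not_hStep_ret _) h'
    | opHead h' =>
      cases uniq (not_hStep_opc _ _ _) h'
      exact .inl ⟨rfl, rfl⟩
    | opParam h' =>
      cases uniq (not_hStep_opc _ _ _) h'
      exact .inr (.inl ⟨_, rfl, rfl, rfl⟩)
    | opChild h' hi hl =>
      cases uniq (not_hStep_opc _ _ _) h'
      exact .inr (.inr ⟨_, _, hi, rfl, hl⟩)
  · rintro (⟨rfl, rfl⟩ | ⟨v, rfl, rfl, rfl⟩ | ⟨i, q, hi, rfl, hl⟩)
    exacts [.opHead h, .opParam h, .opChild h hi hl]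

end EffectTree

/-! ### Typing under renaming -/

/-- `ρ` renames the context `Γ` into `Δ`: it sends every variable of `Γ` to a variable of `Δ` of
the same type. -/
def CtxRen {α : Type*} (ρ : ℕ → ℕ) (Γ Δ : List α) : Prop :=
  ∀ n T, Γ[n]? = some T → Δ[ρ n]? = some T

theorem CtxRen.upr {α : Type*} {ρ : ℕ → ℕ} {Γ Δ : List α} (h : CtxRen ρ Γ Δ) (T : α) :
    CtxRen (upr ρ) (T :: Γ) (T :: Δ)
  | 0, _, hn => hn
  | n + 1, _, hn => h n _ hn

section Typing

variable {cvTy : CV → BV} {opPar : Op → BV} {opAr : Op → ℕ}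

mutual
theorem HVTy.renV : ∀ {Γ Δ V T} {ρ : ℕ → ℕ}, HVTy cvTy opPar opAr Γ V T → CtxRen ρ Γ Δ →
    HVTy cvTy opPar opAr Δ (renV ρ V) T
  | _, _, _, _, _, .cv v, _ => by rw [HEPCF.renV]; exact .cv v
  | _, _, _, _, _, .num h, _ => by rw [HEPCF.renV]; exact .num h
  | _, _, _, _, _, .var h, hρ => by rw [HEPCF.renV]; exact .var (hρ _ _ h)
  | _, _, _, _, _, .lam h, hρ => by rw [HEPCF.renV]; exact .lam (h.renC (hρ.upr _))
  | _, _, _, _, _, .fixv h, hρ => by rw [HEPCF.renV]; exact .fixv (h.renV (hρ.upr _))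
theorem HCTy.renC : ∀ {Γ Δ E C T} {ρ : ℕ → ℕ}, HCTy cvTy opPar opAr Γ E C T → CtxRen ρ Γ Δ →
    HCTy cvTy opPar opAr Δ E (renC ρ C) T
  | _, _, _, _, _, _, .app h h', hρ => by rw [HEPCF.renC]; exact .app (h.renV hρ) (h'.renV hρ)
  | _, _, _, _, _, _, .ret h, hρ => by rw [HEPCF.renC]; exact .ret (h.renV hρ)
  | _, _, _, _, _, _, .letin h h', hρ => by
      rw [HEPCF.renC]; exact .letin (h.renC hρ) (h'.renC (hρ.upr _))
  | _, _, _, _, _, _, .opc hσ h h', hρ => by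
      rw [HEPCF.renC]; exact .opc hσ (h.renV hρ) (h'.renC (hρ.upr _))
  | _, _, _, _, _, _, .case h h', hρ => by
      rw [HEPCF.renC]; exact .case (h.renV hρ) fun i => (h' i).renC hρ
  | _, _, _, _, _, _, .handle h h' h'', hρ => by
      rw [HEPCF.renC]
      exact .handle (h.renC hρ) (h'.renC (hρ.upr _)) fun σ hσ =>
        (h'' σ hσ).renC ((hρ.upr _).upr _)
end

end Typing

end HEPCF

namespace P2H

open HEPCF
open PCF (PTy PVal PComp PVTy PCTy PStep pnum)

/-- The values of HEPCF over the signature `{σ : Unit ⇝ 1}`. -/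
abbrev UVal := HVal Unit Unit

/-- The computations of HEPCF over the signature `{σ : Unit ⇝ 1}`. -/
abbrev UComp := HComp Unit Unit

/-! ### Counting thunks -/

/-- The computation `X` performs the effect `σ` exactly `n` times, being resumed with the unique
element of the arity `1` each time, and then returns `()`. -/
def CountsTo : ℕ → UComp → Prop
  | 0, X => HSteps X (.ret (.cv ()))
  | n + 1, X => ∃ Y, HSteps X (.opc () (.cv ()) Y) ∧ CountsTo n (subst0C (.num 0 1) Y)

theorem CountsTo.of_steps {n : ℕ} {X X' : UComp} (hn : CountsTo n X') (h : HSteps X X') :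
    CountsTo n X :=
  match n, hn with
  | 0, hn => h.trans hn
  | _ + 1, ⟨Y, hY, hn⟩ => ⟨Y, h.trans hY, hn⟩

/-- The thunk `λx. σ(z. A ())`, which performs one more effect than `A`. -/
def succThunk (A : UVal) : UVal :=
  .lam (.opc () (.cv ()) (.app (renV (· + 2) A) (.cv ())))

theorem scopedV_ZUU : ScopedV 0 ZUU := .lam (.ret (.cv ()))

theorem scopedV_succThunk {k : ℕ} {A : UVal} (hA : ScopedV k A) : ScopedV k (succThunk A) :=
  .lam (.opc (.cv ()) (.app (hA.renV fun i hi => by omega) (.cv ())))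

theorem countsTo_ZUU : CountsTo 0 (.app ZUU (.cv ())) :=
  .single (.beta_of_eq (by simp [subst0C, subC, subV]))

theorem countsTo_succThunk {n : ℕ} {A : UVal} (hA : ScopedV 0 A)
    (hn : CountsTo n (.app A (.cv ()))) : CountsTo (n + 1) (.app (succThunk A) (.cv ())) := by
  refine ⟨_, .single (.beta _ _), ?_⟩
  simpa [subst0C, subC, subV, hA.renV_closed, hA.subV_closed] using hn

theorem subV_succThunk (σ : ℕ → UVal) (A : UVal) :
    subV σ (succThunk A) = succThunk (subV σ A) := by
  have hup : upsH (upsH σ) ∘ (· + 2) = fun n => renV (· + 2) (σ n) := by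
    funext n; simp only [Function.comp, upsH, renV_renV]; rfl
  simp only [succThunk, subV, subC, subV_renV, renV_subV, hup]

theorem renV_succThunk (ρ : ℕ → ℕ) (A : UVal) :
    renV ρ (succThunk A) = succThunk (renV ρ A) := by
  rw [renV_eq_subV, subV_succThunk, ← renV_eq_subV]

/-! ### The translated case distinction -/

theorem subV_Z (σ : ℕ → UVal) : ∀ T, subV σ (Z T) = Z T
  | .base _ => by simp [Z, subV]
  | .enum _ => by simp [Z, subV]
  | .arr _ _ U => by simp [Z, subV, subC, subV_Z _ U]

theorem scopedV_Z (T : HTy Unit Unit) : ScopedV 0 (Z T) := by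
  intro σ τ _; rw [subV_Z, subV_Z]

theorem subC_retClause (σ : ℕ → UVal) (A : UComp) :
    subC (upsH σ) (retClause A) = retClause (subC σ A) := by
  simp only [retClause, subC, subV, ZUU, upsH]
  rw [subC_renC, renC_subC]
  congr 6
  funext n
  simp only [Function.comp, upsH, renV_renV]; rfl

theorem subC_sigClause (σ : ℕ → UVal) (T : PTy) (B : UComp) :
    subC (upsH (upsH σ)) (sigClause T B) = sigClause T (subC (upsH σ) B) := by
  simp only [sigClause, subC, subV, upsH, subV_Z, renV]
  rw [subC_renC, renC_subC]
  congr 7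
  funext n
  cases n with
  | zero => rfl
  | succ n => simp only [Function.comp, upsH, renV_renV]; rfl

theorem scopedC_retClause {k : ℕ} {A : UComp} (hA : ScopedC k A) :
    ScopedC (k + 1) (retClause A) :=
  .ret (.lam (.letin (.app (.var (by omega)) (scopedV_ZUU.mono (by omega)))
    (.app (.var (by omega)) (.lam (hA.renC fun i hi => by omega)))))

theorem scopedC_sigClause {k : ℕ} {B : UComp} (T : PTy) (hB : ScopedC (k + 1) B) :
    ScopedC (k + 2) (sigClause T B) := by
  refine .letin (.ret (.lam (.letin (.letin (.app (.var (by omega)) (.num 0 1))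
    (.app (.var (by omega)) (.lam (.ret (.lam (.letin (.app (.var (by omega)) (.cv ()))
      (.ret ((scopedV_Z _).mono (by omega)))))))))
    (.ret (.cv ()))))) (.ret (.lam (.letin (.app (.var (by omega))
      (.lam (.opc (.cv ()) (.app (.var (by omega)) (.cv ())))))
    (.app (.var (by omega)) (.lam (hB.renC ?_))))))
  rintro (_ | i) hi <;> simp only <;> omega

theorem scopedV_sndSel : ScopedV 0 sndSel :=
  .lam (.ret (.lam (.app (.var (by omega)) (.cv ()))))

/-- `handle H(C,D) X`, where `A = ⟦C⟧` and `B = ⟦D⟧` are the branches of a case distinction of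
type `T` and `H(C,D)` is the handler of its translation. -/
def handleCase (T : PTy) (A B X : UComp) : UComp :=
  .handle (retClause A) (fun _ => sigClause T B) X

/-- The translation of a case distinction of type `T` on `V` with branches `C` and `D`, where
`X = ⟦V⟧`, `A = ⟦C⟧` and `B = ⟦D⟧`. -/
def trCase (T : PTy) (X : UVal) (A B : UComp) : UComp :=
  .letin (handleCase T A B (.app X (.cv ()))) (.app (.var 0) sndSel)

theorem subC_trCase (σ : ℕ → UVal) (T : PTy) (X : UVal) (A B : UComp) :
    subC σ (trCase T X A B) = trCase T (subV σ X) (subC σ A) (subC (upsH σ) B) := by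
  simp only [trCase, handleCase, subC, subC_retClause, subC_sigClause, subV,
    scopedV_sndSel.subV_closed, upsH]

theorem renC_trCase (ρ : ℕ → ℕ) (T : PTy) (X : UVal) (A B : UComp) :
    renC ρ (trCase T X A B) = trCase T (renV ρ X) (renC ρ A) (renC (upr ρ) B) := by
  simp only [renC_eq_subC, renV_eq_subV, subC_trCase, upsH_var_comp]

theorem scopedC_handleCase {k : ℕ} {A B X : UComp} (T : PTy) (hA : ScopedC k A)
    (hB : ScopedC (k + 1) B) (hX : ScopedC k X) : ScopedC k (handleCase T A B X) :=
  .handle (scopedC_retClause hA) (fun _ => scopedC_sigClause T hB) hX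

theorem scopedC_trCase {k : ℕ} {X : UVal} {A B : UComp} (T : PTy) (hX : ScopedV k X)
    (hA : ScopedC k A) (hB : ScopedC (k + 1) B) : ScopedC k (trCase T X A B) :=
  .letin (scopedC_handleCase T hA hB (.app hX (.cv ())))
    (.app (.var (by omega)) (scopedV_sndSel.mono (by omega)))

/-! ### The simulation relation -/

mutual
/-- `SimV Γ A V T`: the HEPCF value `A` simulates the PCF value `V` of type `T` in the context `Γ`.
This is the relation `A = ⟦V⟧` closed under one more rule, by which a closed thunk performing `σ`
exactly `n` times simulates the numeral `n`. -/
inductive SimV : List PTy → UVal → PVal → PTy → Prop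
  | zero {Γ} : SimV Γ ZUU .zero .nat
  | succ {Γ A V} : SimV Γ A V .nat → SimV Γ (succThunk A) (.succ V) .nat
  | var {Γ n T} : Γ[n]? = some T → SimV Γ (.var n) (.var n) T
  | lam {Γ A C T U} : SimC (T :: Γ) A C U → SimV Γ (.lam A) (.lam C) (.arr T U)
  | fixp {Γ A V T U} : SimV (.arr T U :: Γ) A V (.arr T U) →
      SimV Γ (.fixv A) (.fixp V) (.arr T U)
  | num {Γ A V n} : V = pnum n → ScopedV 0 A → CountsTo n (.app A (.cv ())) → SimV Γ A V .nat
/-- `SimC Γ A C T`: the HEPCF computation `A` simulates the PCF computation `C` of type `T` in the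
context `Γ`; see `SimV`. -/
inductive SimC : List PTy → UComp → PComp → PTy → Prop
  | app {Γ A B V W T U} : SimV Γ A V (.arr T U) → SimV Γ B W T → SimC Γ (.app A B) (.app V W) U
  | ret {Γ A V T} : SimV Γ A V T → SimC Γ (.ret A) (.ret V) T
  | letin {Γ A B C D T U} : SimC Γ A C T → SimC (T :: Γ) B D U →
      SimC Γ (.letin A B) (.letin C D) U
  | pcase {Γ X A B V C D T} : SimV Γ X V .nat → SimC Γ A C T → SimC (.nat :: Γ) B D T →
      SimC Γ (trCase T X A B) (.pcase T V C D) T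
end

mutual
theorem simV_trV : ∀ {Γ V T}, PVTy Γ V T → SimV Γ (trV V) V T
  | _, _, _, .zero => by rw [trV]; exact .zero
  | _, _, _, .succ h => by rw [trV]; exact .succ (simV_trV h)
  | _, _, _, .var h => by rw [trV]; exact .var h
  | _, _, _, .lam h => by rw [trV]; exact .lam (simC_trC h)
  | _, _, _, .fixp h => by rw [trV]; exact .fixp (simV_trV h)
theorem simC_trC : ∀ {Γ C T}, PCTy Γ C T → SimC Γ (trC C) C T
  | _, _, _, .app h h' => by rw [trC]; exact .app (simV_trV h) (simV_trV h')
  | _, _, _, .ret h => by rw [trC]; exact .ret (simV_trV h)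
  | _, _, _, .letin h h' => by rw [trC]; exact .letin (simC_trC h) (simC_trC h')
  | _, _, _, .pcase h h' h'' => by
      rw [trC]; exact .pcase (simV_trV h) (simC_trC h') (simC_trC h'')
end

mutual
theorem SimV.scoped : ∀ {Γ A V T}, SimV Γ A V T → ScopedV Γ.length A
  | _, _, _, _, .zero => scopedV_ZUU.mono (Nat.zero_le _)
  | _, _, _, _, .succ h => scopedV_succThunk h.scoped
  | _, _, _, _, .var h => .var (List.getElem?_eq_some_iff.1 h).1
  | _, _, _, _, .lam h => .lam h.scoped
  | _, _, _, _, .fixp h => .fixv h.scoped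
  | _, _, _, _, .num _ h _ => h.mono (Nat.zero_le _)
theorem SimC.scoped : ∀ {Γ A C T}, SimC Γ A C T → ScopedC Γ.length A
  | _, _, _, _, .app h h' => .app h.scoped h'.scoped
  | _, _, _, _, .ret h => .ret h.scoped
  | _, _, _, _, .letin h h' => .letin h.scoped h'.scoped
  | _, _, _, _, .pcase h h' h'' => scopedC_trCase _ h.scoped h'.scoped h''.scoped
end

theorem renV_pnum (ρ : ℕ → ℕ) : ∀ n, PCF.renV ρ (pnum n) = pnum n
  | 0 => by rw [pnum, PCF.renV]
  | n + 1 => by rw [pnum, PCF.renV, renV_pnum ρ n]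

theorem subV_pnum (σ : ℕ → PVal) : ∀ n, PCF.subV σ (pnum n) = pnum n
  | 0 => by rw [pnum, PCF.subV]
  | n + 1 => by rw [pnum, PCF.subV, subV_pnum σ n]

theorem pcf_upr_eq : PCF.upr = upr := by
  funext ρ n; cases n <;> rfl

mutual
theorem SimV.ren : ∀ {Γ Δ A V T} {ρ : ℕ → ℕ}, SimV Γ A V T → CtxRen ρ Γ Δ →
    SimV Δ (renV ρ A) (PCF.renV ρ V) T
  | _, _, _, _, _, _, .zero, _ => by
      rw [scopedV_ZUU.renV_closed, PCF.renV]; exact .zero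
  | _, _, _, _, _, _, .succ h, hρ => by rw [renV_succThunk, PCF.renV]; exact .succ (h.ren hρ)
  | _, _, _, _, _, _, .var h, hρ => by rw [renV, PCF.renV]; exact .var (hρ _ _ h)
  | _, _, _, _, _, _, .lam h, hρ => by
      rw [renV, PCF.renV, pcf_upr_eq]; exact .lam (h.ren (hρ.upr _))
  | _, _, _, _, _, _, .fixp h, hρ => by
      rw [renV, PCF.renV, pcf_upr_eq]; exact .fixp (h.ren (hρ.upr _))
  | _, _, _, _, _, _, .num hV h hn, _ => by
      rw [h.renV_closed, hV, renV_pnum]; exact .num rfl h hn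
theorem SimC.ren : ∀ {Γ Δ A C T} {ρ : ℕ → ℕ}, SimC Γ A C T → CtxRen ρ Γ Δ →
    SimC Δ (renC ρ A) (PCF.renC ρ C) T
  | _, _, _, _, _, _, .app h h', hρ => by
      rw [renC, PCF.renC]; exact .app (h.ren hρ) (h'.ren hρ)
  | _, _, _, _, _, _, .ret h, hρ => by rw [renC, PCF.renC]; exact .ret (h.ren hρ)
  | _, _, _, _, _, _, .letin h h', hρ => by
      rw [renC, PCF.renC, pcf_upr_eq]; exact .letin (h.ren hρ) (h'.ren (hρ.upr _))
  | _, _, _, _, _, _, .pcase h h' h'', hρ => by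
      rw [renC_trCase, PCF.renC, pcf_upr_eq]
      exact .pcase (h.ren hρ) (h'.ren hρ) (h''.ren (hρ.upr _))
end

/-- The substitutions `σ` of HEPCF and `τ` of PCF, out of the context `Γ` and into the context `Δ`,
are related pointwise by `SimV`. -/
def SimSubst (Γ Δ : List PTy) (σ : ℕ → UVal) (τ : ℕ → PVal) : Prop :=
  ∀ n T, Γ[n]? = some T → SimV Δ (σ n) (τ n) T

theorem SimSubst.cons {Γ Δ : List PTy} {σ : ℕ → UVal} {τ : ℕ → PVal} (h : SimSubst Γ Δ σ τ)
    (U : PTy) : SimSubst (U :: Γ) (U :: Δ) (upsH σ) (PCF.upsP τ)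
  | 0, _, hn => .var hn
  | n + 1, _, hn => (h n _ hn).ren fun _ _ => id

theorem SimSubst.single {Γ : List PTy} {A : UVal} {V : PVal} {U : PTy} (h : SimV Γ A V U) :
    SimSubst (U :: Γ) Γ (fun n => match n with | 0 => A | n + 1 => .var n)
      (fun n => match n with | 0 => V | n + 1 => .var n)
  | 0, _, hn => Option.some.inj hn ▸ h
  | _ + 1, _, hn => .var hn

mutual
theorem SimV.sub : ∀ {Γ Δ A V T σ τ}, SimV Γ A V T → SimSubst Γ Δ σ τ →
    SimV Δ (subV σ A) (PCF.subV τ V) T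
  | _, _, _, _, _, _, _, .zero, _ => by
      rw [scopedV_ZUU.subV_closed, PCF.subV]; exact .zero
  | _, _, _, _, _, _, _, .succ h, hσ => by
      rw [subV_succThunk, PCF.subV]; exact .succ (h.sub hσ)
  | _, _, _, _, _, _, _, .var h, hσ => by rw [subV, PCF.subV]; exact hσ _ _ h
  | _, _, _, _, _, _, _, .lam h, hσ => by rw [subV, PCF.subV]; exact .lam (h.sub (hσ.cons _))
  | _, _, _, _, _, _, _, .fixp h, hσ => by rw [subV, PCF.subV]; exact .fixp (h.sub (hσ.cons _))
  | _, _, _, _, _, _, _, .num hV h hn, _ => by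
      rw [h.subV_closed, hV, subV_pnum]; exact .num rfl h hn
theorem SimC.sub : ∀ {Γ Δ A C T σ τ}, SimC Γ A C T → SimSubst Γ Δ σ τ →
    SimC Δ (subC σ A) (PCF.subC τ C) T
  | _, _, _, _, _, _, _, .app h h', hσ => by
      rw [subC, PCF.subC]; exact .app (h.sub hσ) (h'.sub hσ)
  | _, _, _, _, _, _, _, .ret h, hσ => by rw [subC, PCF.subC]; exact .ret (h.sub hσ)
  | _, _, _, _, _, _, _, .letin h h', hσ => by
      rw [subC, PCF.subC]; exact .letin (h.sub hσ) (h'.sub (hσ.cons _))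
  | _, _, _, _, _, _, _, .pcase h h' h'', hσ => by
      rw [subC_trCase, PCF.subC]; exact .pcase (h.sub hσ) (h'.sub hσ) (h''.sub (hσ.cons _))
end

theorem SimC.subst0 {Γ A C T U W W'} (h : SimC (U :: Γ) A C T) (hW : SimV Γ W W' U) :
    SimC Γ (subst0C W A) (PCF.subst0C W' C) T :=
  h.sub (.single hW)

theorem SimV.subst0 {Γ A V T U W W'} (h : SimV (U :: Γ) A V T) (hW : SimV Γ W W' U) :
    SimV Γ (subst0V W A) (PCF.subst0V W' V) T :=
  h.sub (.single hW)

theorem SimV.exists_pnum : ∀ {V A}, SimV [] A V .nat →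
    ∃ n, V = pnum n ∧ CountsTo n (.app A (.cv ()))
  | _, _, .zero => ⟨0, rfl, countsTo_ZUU⟩
  | _, _, .succ h => by
      obtain ⟨n, rfl, hn⟩ := h.exists_pnum
      exact ⟨n + 1, rfl, countsTo_succThunk h.scoped hn⟩
  | _, _, .num hV _ hn => ⟨_, hV, hn⟩

theorem pnum_injective : Function.Injective pnum
  | 0, 0, _ => rfl
  | _ + 1, _ + 1, h => congrArg (· + 1) (pnum_injective (PVal.succ.inj h))

theorem SimV.countsTo {A : UVal} {n : ℕ} (h : SimV [] A (pnum n) .nat) :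
    CountsTo n (.app A (.cv ())) := by
  obtain ⟨m, hm, hA⟩ := h.exists_pnum
  rwa [pnum_injective hm]

/-! ### Evaluation of the translated case distinction -/

/-- The Church-encoded pair `λp. let f = p a in f b`. -/
def pair (a b : UVal) : UVal :=
  .lam (.letin (.app (.var 0) a) (.app (.var 0) b))

/-- The selector `λf,g. let z = f () in Z_{⟦T⟧}`, by which the `σ` clause runs the first component
of a pair for its effects only. -/
def runFst (T : PTy) : UVal :=
  .lam (.ret (.lam (.letin (.app (.var 1) (.cv ())) (.ret (Z (trTy T))))))

/-- The thunk which the `σ` clause, called with the continuation `K`, binds to the predecessor: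
`λx. let y = K 0̲ (λf,g. let z = f () in Z_{⟦T⟧}) in return(())`. -/
def predThunk (T : PTy) (K : UVal) : UVal :=
  .lam (.letin (.letin (.app K (.num 0 1)) (.app (.var 0) (runFst T))) (.ret (.cv ())))

theorem scopedV_runFst (T : PTy) : ScopedV 0 (runFst T) :=
  .lam (.ret (.lam (.letin (.app (.var (by omega)) (.cv ()))
    (.ret ((scopedV_Z _).mono (by omega))))))

theorem scopedV_predThunk {K : UVal} (T : PTy) (hK : ScopedV 0 K) : ScopedV 0 (predThunk T K) :=
  .lam (.letin (.letin (.app (hK.mono (by omega)) (.num 0 1))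
    (.app (.var (by omega)) ((scopedV_runFst T).mono (by omega)))) (.ret (.cv ())))

section Pair

variable {a b : UVal} (ha : ScopedV 0 a) (hb : ScopedV 0 b)
include ha hb

theorem app_pair_hStep (P : UVal) :
    HStep (.app (pair a b) P) (.letin (.app P a) (.app (.var 0) b)) :=
  .beta_of_eq (by simp [subst0C, subC, subV, ha.subV_closed, hb.subV_closed, upsH])

theorem app_pair_sndSel_steps : HStepsPlus (.app (pair a b) sndSel) (.app b (.cv ())) := by
  refine .head (app_pair_hStep ha hb _) ?_
  refine .head (.letCong _ (.beta_of_eq (D := .ret (.lam (.app (.var 0) (.cv ())))) ?_)) ?_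
  · simp [subst0C, subC, subV, upsH]
  refine .head (.letRet_of_eq (D := .app (.lam (.app (.var 0) (.cv ()))) b) ?_) ?_
  · simp [subst0C, subC, subV, hb.subV_closed]
  · exact .single (.beta_of_eq (by simp [subst0C, subC, subV]))

theorem app_pair_runFst_steps (T : PTy) :
    HSteps (.app (pair a b) (runFst T)) (.letin (.app a (.cv ())) (.ret (Z (trTy T)))) := by
  let run : UComp := .letin (.app a (.cv ())) (.ret (Z (trTy T)))
  refine .head (app_pair_hStep ha hb _) ?_
  refine .head (.letCong _ (.beta_of_eq (D := .ret (.lam run)) ?_)) ?_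
  · simp [run, subst0C, subC, subV, upsH, ha.renV_closed, subV_Z]
  refine .head (.letRet_of_eq (D := .app (.lam run) b) ?_) ?_
  · simp [subst0C, subC, subV, hb.subV_closed]
  · exact .single (.beta_of_eq (by simp [run, subst0C, subC, subV, ha.subV_closed, subV_Z]))

end Pair

theorem CountsTo.letin_ret {n : ℕ} {X : UComp} {V : UVal} (hV : ScopedV 0 V) (hn : CountsTo n X) :
    CountsTo n (.letin (.letin X (.ret V)) (.ret (.cv ()))) := by
  induction n generalizing X with
  | zero =>
    refine (letin_steps _ (letin_steps _ hn)).trans ?_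
    refine .head (.letCong _ (.letRet_of_eq (D := .ret V) ?_)) (.single (.letRet_of_eq ?_))
    · simp [subst0C, subC, hV.subV_closed]
    · simp [subst0C, subC, subV]
  | succ n ih =>
    obtain ⟨Y, hY, hn⟩ := hn
    refine ⟨_, (letin_steps _ (letin_steps _ hY)).trans
      (.head (.letCong _ (.letOp _ _ _ _)) (.single (.letOp _ _ _ _))), ?_⟩
    simpa [subst0C, subC, renC, renV, subV, hV.renV_closed, hV.subV_closed] using ih hn

theorem countsTo_predThunk {n : ℕ} {T : PTy} {K a b : UVal} (hK : ScopedV 0 K)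
    (ha : ScopedV 0 a) (hb : ScopedV 0 b) (hKab : HSteps (.app K (.num 0 1)) (.ret (pair a b)))
    (hn : CountsTo n (.app a (.cv ()))) : CountsTo n (.app (predThunk T K) (.cv ())) := by
  refine (hn.letin_ret (scopedV_Z (trTy T))).of_steps ?_
  refine .head (.beta_of_eq (D := .letin (.letin (.app K (.num 0 1))
    (.app (.var 0) (runFst T))) (.ret (.cv ()))) ?_) (letin_steps _ ?_)
  · simp only [subst0C, subC, subV, upsH, hK.subV_closed, (scopedV_runFst T).subV_closed]
  refine (letin_steps _ hKab).trans (.head (.letRet_of_eq ?_) (app_pair_runFst_steps ha hb T))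
  simp only [subst0C, subC, subV, (scopedV_runFst T).subV_closed]

/-- The last part of the `σ` clause, which pairs the successor of the thunk bound to variable `0`
with the thunk of `B` at that predecessor. -/
def sigPair (B : UComp) : UComp :=
  .ret (.lam (.letin (.app (.var 0) (.lam (.opc () (.cv ()) (.app (.var 3) (.cv ())))))
    (.app (.var 0) (.lam (renC (fun m => match m with | 0 => 3 | m + 1 => m + 6) B)))))

theorem subC_sub2_sigClause {T : PTy} {K : UVal} {B : UComp} (hK : ScopedV 0 K) :
    subC (sub2 K (.cv ())) (sigClause T B) =
      .letin (.ret (predThunk T K)) (subC (upsH (sub2 K (.cv ()))) (sigPair B)) := by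
  simp only [sigClause, sigPair, subC, subV, predThunk, runFst, upsH, sub2, subV_Z, hK.renV_closed,
    renV]

theorem subst0C_sigPair {N : UVal} {B : UComp} (σ : ℕ → UVal) (hN : ScopedV 0 N)
    (hB : ScopedC 1 B) :
    subst0C N (subC (upsH σ) (sigPair B)) =
      .ret (pair (succThunk N) (.lam (subst0C N B))) := by
  simp only [sigPair, subst0C, subC, subV, upsH, renV, pair, succThunk, subC_renC, subC_subC,
    hN.renV_closed]
  congr 5
  refine hB _ _ fun i hi => ?_
  obtain rfl : i = 0 := by omega
  simp only [Function.comp, upsH, renV, subV, hN.renV_closed]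

section Case

variable {A B : UComp}

/-- The computation `D` continues a case distinction with branches `A` and `B` on a numeral `n`:
it is `A` if `n = 0`, and otherwise `B` with some closed thunk performing `σ` exactly `n - 1` times
for the predecessor. -/
def CaseBranch (A B : UComp) : ℕ → UComp → Prop
  | 0, D => D = A
  | n + 1, D => ∃ N, ScopedV 0 N ∧ CountsTo n (.app N (.cv ())) ∧ D = subst0C N B

variable (hA : ScopedC 0 A) (hB : ScopedC 1 B)
include hA

theorem handleCase_ret_hStep (T : PTy) :
    HStep (handleCase T A B (.ret (.cv ()))) (.ret (pair ZUU (.lam A))) := by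
  have hsub : subst0C (.cv ()) (retClause A) = .ret (pair ZUU (.lam A)) := by
    simp only [retClause, subst0C, subC, subV, hA.renC_closed, hA.subC_closed,
      scopedV_ZUU.subV_closed, upsH, pair]
  exact hsub ▸ .hRet _ _ _

include hB

theorem CaseBranch.scoped {n : ℕ} {D : UComp} (hD : CaseBranch A B n D) : ScopedC 0 D :=
  match n, hD with
  | 0, rfl => hA
  | _ + 1, ⟨_, hN, _, rfl⟩ => hB.subst0C hN

theorem handleCase_opc_steps (T : PTy) {Y : UComp} (hY : ScopedC 1 Y) :
    ∃ K, ScopedV 0 K ∧ HSteps (.app K (.num 0 1)) (handleCase T A B (subst0C (.num 0 1) Y)) ∧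
      HSteps (handleCase T A B (.opc () (.cv ()) Y))
        (.ret (pair (succThunk (predThunk T K)) (.lam (subst0C (predThunk T K) B)))) := by
  have hret : ScopedC 1 (retClause A) := scopedC_retClause hA
  have hsig (_ : Unit) : ScopedC 2 (sigClause T B) := scopedC_sigClause T hB
  have hK : ScopedV 0 (.lam (handleCase T A B Y)) :=
    .lam (scopedC_handleCase T (hA.mono zero_le_one) (hB.mono one_le_two) hY)
  refine ⟨_, hK, .single (.beta_of_eq (subC_handle_of_scoped hret hsig _)), .head (.hOp ..) ?_⟩
  rw [contVal_of_scoped hret hsig, ← handleCase, subC_sub2_sigClause hK]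
  exact .single (.letRet_of_eq (subst0C_sigPair _ (scopedV_predThunk T hK) hB))

theorem handleCase_steps {n : ℕ} {X : UComp} (T : PTy) (hX : ScopedC 0 X) (hn : CountsTo n X) :
    ∃ a D, ScopedV 0 a ∧ CountsTo n (.app a (.cv ())) ∧ CaseBranch A B n D ∧
      HSteps (handleCase T A B X) (.ret (pair a (.lam D))) := by
  induction n generalizing X with
  | zero =>
    exact ⟨ZUU, A, scopedV_ZUU, countsTo_ZUU, rfl,
      (handle_steps _ _ hn).tail (handleCase_ret_hStep hA T)⟩
  | succ n ih =>
    obtain ⟨Y, hXY, hn⟩ := hn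
    have hY : ScopedC 1 Y := (hX.reflTransGen hXY).opc_body
    obtain ⟨K, hK, hKY, hsteps⟩ := handleCase_opc_steps hA hB T hY
    obtain ⟨a, D, ha, hna, hD, haD⟩ := ih (hY.subst0C (.num 0 1)) hn
    have hN : ScopedV 0 (predThunk T K) := scopedV_predThunk T hK
    have hb : ScopedV 0 (.lam D) := .lam ((hD.scoped hA hB).mono zero_le_one)
    have hnN : CountsTo n (.app (predThunk T K) (.cv ())) :=
      countsTo_predThunk hK ha hb (hKY.trans haD) hna
    exact ⟨_, _, scopedV_succThunk hN, countsTo_succThunk hN hnN, ⟨_, hN, hnN, rfl⟩,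
      (handle_steps _ _ hXY).trans hsteps⟩

theorem trCase_steps {n : ℕ} {X : UVal} (T : PTy) (hX : ScopedV 0 X)
    (hn : CountsTo n (.app X (.cv ()))) :
    ∃ D, CaseBranch A B n D ∧ HStepsPlus (trCase T X A B) D := by
  obtain ⟨a, D, ha, -, hD, hsteps⟩ := handleCase_steps hA hB T (.app hX (.cv ())) hn
  have hDc : ScopedC 0 D := hD.scoped hA hB
  have hb : ScopedV 0 (.lam D) := .lam (hDc.mono zero_le_one)
  have hpair : HStep (.letin (.ret (pair a (.lam D))) (.app (.var 0) sndSel))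
      (.app (pair a (.lam D)) sndSel) :=
    .letRet_of_eq (by simp only [subst0C, subC, subV, scopedV_sndSel.subV_closed])
  refine ⟨D, hD, .trans_right ((letin_steps _ hsteps).tail hpair) ?_⟩
  exact (app_pair_sndSel_steps ha hb).tail (.beta_of_eq (hDc.subC_closed _))

end Case

/-! ### The simulation -/

theorem SimC.step {A : UComp} {C D : PComp} {T : PTy} (h : SimC [] A C T) (hCD : PStep C D) :
    ∃ B, HStepsPlus A B ∧ SimC [] B D T := by
  induction hCD generalizing A T with
  | beta =>
    cases h with
    | app h₁ h₂ =>
      cases h₁ with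
      | lam h₁ => exact ⟨_, .single (.beta _ _), h₁.subst0 h₂⟩
  | fix =>
    cases h with
    | app h₁ h₂ =>
      cases h₁ with
      | fixp h₁ => exact ⟨_, .single (.fix _ _), .app (h₁.subst0 (.fixp h₁)) h₂⟩
  | letRet =>
    cases h with
    | letin h₁ h₂ =>
      cases h₁ with
      | ret h₁ => exact ⟨_, .single (.letRet _ _), h₂.subst0 h₁⟩
  | letCong _ _ ih =>
    cases h with
    | letin h₁ h₂ =>
      obtain ⟨B, hB, hsim⟩ := ih h₁
      exact ⟨_, hB.lift (HComp.letin · _) fun _ _ => .letCong _, .letin hsim h₂⟩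
  | caseZero =>
    cases h with
    | pcase h₁ h₂ h₃ =>
      obtain ⟨_, rfl, hsteps⟩ :=
        trCase_steps h₂.scoped h₃.scoped _ h₁.scoped (h₁.countsTo (n := 0))
      exact ⟨_, hsteps, h₂⟩
  | caseSucc =>
    cases h with
    | pcase h₁ h₂ h₃ =>
      obtain ⟨n, hV, hn⟩ := h₁.exists_pnum
      cases n with
      | zero => cases hV
      | succ n =>
        obtain rfl : _ = pnum n := PVal.succ.inj hV
        obtain ⟨_, ⟨N, hN, hnN, rfl⟩, hsteps⟩ :=
          trCase_steps h₂.scoped h₃.scoped _ h₁.scoped hn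
        exact ⟨_, hsteps, h₃.subst0 (.num rfl hN hnN)⟩

theorem forwardSimulation_simC (T : PTy) :
    ForwardSimulation PStep HStep fun C A => SimC [] A C T :=
  fun _ _ _ h hstep => h.step hstep

/-! ### Effect trees of numerals -/

theorem numTreeAt_succ {n : ℕ} {p : List ℕ} {l : Option (HLab Unit Unit)} :
    numTreeAt (n + 1) p l ↔ (p = [] ∧ l = some (.opl ())) ∨ (p = [0] ∧ l = some (.cvl ())) ∨
      ∃ q, p = 1 :: q ∧ numTreeAt n q l := by
  constructor
  · rintro (⟨_ | m, hm, rfl, rfl⟩ | ⟨_ | m, hm, rfl, rfl⟩ | ⟨rfl, rfl⟩)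
    · exact .inl ⟨rfl, rfl⟩
    · exact .inr (.inr ⟨_, rfl, .inl ⟨m, by omega, rfl, rfl⟩⟩)
    · exact .inr (.inl ⟨rfl, rfl⟩)
    · exact .inr (.inr ⟨_, rfl, .inr (.inl ⟨m, by omega, rfl, rfl⟩)⟩)
    · exact .inr (.inr ⟨_, rfl, .inr (.inr ⟨rfl, rfl⟩)⟩)
  · rintro (⟨rfl, rfl⟩ | ⟨rfl, rfl⟩ | ⟨q, rfl, ⟨m, hm, rfl, rfl⟩ | ⟨m, hm, rfl, rfl⟩ | ⟨rfl, rfl⟩⟩)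
    · exact .inl ⟨0, by omega, rfl, rfl⟩
    · exact .inr (.inl ⟨0, by omega, rfl, rfl⟩)
    · exact .inl ⟨m + 1, by omega, rfl, rfl⟩
    · exact .inr (.inl ⟨m + 1, by omega, rfl, rfl⟩)
    · exact .inr (.inr ⟨rfl, rfl⟩)

theorem CountsTo.etAt_iff {n : ℕ} {X : UComp} (hn : CountsTo n X) {p : List ℕ}
    {l : Option (HLab Unit Unit)} : ETAt opArU X p l ↔ numTreeAt n p l := by
  induction n generalizing X p with
  | zero => simp [etAt_iff_of_steps_ret hn, numTreeAt]
  | succ n ih =>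
    obtain ⟨Y, hY, hn⟩ := hn
    rw [etAt_iff_of_steps_opc hY, numTreeAt_succ]
    simp [opArU, ih hn, Unique.exists_iff]

/-! ### Typing of the translation -/

/-- The value typing judgment over the signature `{σ : Unit ⇝ 1}`. -/
abbrev UVTy := @HVTy Unit Unit Unit cvTyU opParU opArU

/-- The computation typing judgment over the signature `{σ : Unit ⇝ 1}`. -/
abbrev UCTy := @HCTy Unit Unit Unit cvTyU opParU opArU

/-- The type `Unit →_E T` of thunks. -/
abbrev thunkTy (T : HTy Unit Unit) : HTy Unit Unit := .arr (.base ()) EU T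

/-- The type of the pairs returned by the handler of a case distinction of type `T`. They are always
eliminated at `T`, so no polymorphism is needed. -/
abbrev pairTy (T : HTy Unit Unit) : HTy Unit Unit :=
  .arr (.arr (thunkTy (.base ())) EU (.arr (thunkTy T) EU T)) EU T

section Typing

variable {Γ : List (HTy Unit Unit)} {T : PTy} {X : UVal} {A B : UComp}

theorem uvTy_Z (Γ : List (HTy Unit Unit)) : ∀ T, UVTy Γ (Z (trTy T)) (trTy T)
  | .nat => by rw [trTy, Z, Z]; exact .lam (.ret (.cv ()))
  | .arr _ U => by rw [trTy, Z]; exact .lam (.ret (uvTy_Z _ U))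

theorem uvTy_succThunk (hX : UVTy Γ X (thunkTy (.base ()))) :
    UVTy Γ (succThunk X) (thunkTy (.base ())) :=
  .lam (.opc (Set.mem_univ _) (.cv ()) (.app (hX.renV fun _ _ => id) (.cv ())))

theorem ucTy_retClause (hA : UCTy Γ EU A (trTy T)) :
    UCTy (.base () :: Γ) EU (retClause A) (pairTy (trTy T)) :=
  .ret (.lam (.letin (.app (.var rfl) (.lam (.ret (.cv ()))))
    (.app (.var rfl) (.lam (hA.renC fun _ _ => id)))))

theorem ucTy_sigClause (hB : UCTy (thunkTy (.base ()) :: Γ) EU B (trTy T)) :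
    UCTy (.arr (.enum 1) EU (pairTy (trTy T)) :: .base () :: Γ) EU (sigClause T B)
      (pairTy (trTy T)) := by
  have hpred : UVTy (.arr (.enum 1) EU (pairTy (trTy T)) :: .base () :: Γ)
      (.lam (.letin (.letin (.app (.var 1) (.num 0 1)) (.app (.var 0) (runFst T)))
        (.ret (.cv ())))) (thunkTy (.base ())) :=
    .lam (.letin (.letin (.app (.var rfl) (.num one_pos)) (.app (.var rfl)
      (.lam (.ret (.lam (.letin (.app (.var rfl) (.cv ())) (.ret (uvTy_Z _ T))))))))
      (.ret (.cv ())))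
  refine .letin (.ret hpred) (.ret (.lam (.letin (.app (.var rfl) (.lam (.opc (Set.mem_univ _)
    (.cv ()) (.app (.var rfl) (.cv ()))))) (.app (.var rfl) (.lam (hB.renC ?_))))))
  rintro (_ | n) U hU <;> exact hU

theorem ucTy_trCase (hX : UVTy Γ X (thunkTy (.base ()))) (hA : UCTy Γ EU A (trTy T))
    (hB : UCTy (thunkTy (.base ()) :: Γ) EU B (trTy T)) :
    UCTy Γ EU (trCase T X A B) (trTy T) :=
  .letin (.handle (E' := EU) (.app hX (.cv ())) (ucTy_retClause hA) fun _ _ => ucTy_sigClause hB)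
    (.app (.var rfl) (.lam (.ret (.lam (.app (.var rfl) (.cv ()))))))

end Typing

mutual
theorem uvTy_trV : ∀ {Γ V T}, PVTy Γ V T → UVTy (Γ.map trTy) (trV V) (trTy T)
  | _, _, _, .zero => by rw [trV, trTy]; exact .lam (.ret (.cv ()))
  | _, _, _, .succ h => by
      have ih := uvTy_trV h
      rw [trTy] at ih
      rw [trV, trTy]
      exact uvTy_succThunk ih
  | _, _, _, .var h => by rw [trV]; exact .var (by rw [List.getElem?_map, h, Option.map_some])
  | _, _, _, .lam h => by rw [trV, trTy]; exact .lam (ucTy_trC h)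
  | _, _, _, .fixp h => by
      have ih := uvTy_trV h
      rw [List.map_cons, trTy] at ih
      rw [trV, trTy]
      exact .fixv ih
theorem ucTy_trC : ∀ {Γ C T}, PCTy Γ C T → UCTy (Γ.map trTy) EU (trC C) (trTy T)
  | _, _, _, .app h h' => by
      have ih := uvTy_trV h
      rw [trTy] at ih
      rw [trC]
      exact .app ih (uvTy_trV h')
  | _, _, _, .ret h => by rw [trC]; exact .ret (uvTy_trV h)
  | _, _, _, .letin h h' => by rw [trC]; exact .letin (ucTy_trC h) (ucTy_trC h')
  | _, _, _, .pcase h h' h'' => by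
      have ih := uvTy_trV h
      have ih'' := ucTy_trC h''
      rw [trTy] at ih
      rw [List.map_cons, trTy] at ih''
      rw [trC]
      exact ucTy_trCase ih (ucTy_trC h') ih''
end

theorem ucTy_Cf {C : PComp} (hC : PCTy [] C .nat) : UCTy [] EU (Cf C) (.base ()) := by
  have h := ucTy_trC hC
  rw [trTy] at h
  exact .letin h (.app (.var rfl) (.cv ()))

/-! ### Evaluation of `C_f` -/

theorem countsTo_Cf {C : PComp} {n : ℕ} (hC : PCTy [] C .nat)
    (hn : Relation.ReflTransGen PStep C (.ret (pnum n))) : CountsTo n (Cf C) := by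
  obtain ⟨_, hsteps, hsim⟩ := (forwardSimulation_simC .nat).reflTransGen (simC_trC hC) hn
  cases hsim with
  | ret hA =>
    exact hA.countsTo.of_steps
      ((letin_steps _ hsteps).tail (.letRet_of_eq (by simp only [subst0C, subC, subV])))

theorem hDiverges_Cf {C : PComp} {T : PTy} (hC : PCTy [] C T) (h : PDiverges C) :
    HDiverges (Cf C) :=
  HDiverges.letin
    ((forwardSimulation_simC T).diverges HStep.rightUnique (simC_trC hC) h) _

end P2H

open PCF HEPCF P2H in
/-- The PCF-to-HEPCF translation correctly computes numerals: for every
closed PCF term `⊢ C : Nat`, the computation `C_f = let a = ⟦C⟧ in a ()` is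
closed of type `Unit` and its effect tree is `σⁿ(return(()))` when `C`
evaluates to the numeral `n`, and `⊥` when `C` diverges. -/
theorem pcf_to_hepcf_numerals (C : PComp) (hC : PCTy [] C .nat) :
    HCTy cvTyU opParU opArU [] EU (Cf C) (.base ()) ∧
    (∀ n : ℕ, Relation.ReflTransGen PStep C (.ret (pnum n)) →
      ∀ p l, ETAt opArU (Cf C) p l ↔ numTreeAt n p l) ∧
    (PDiverges C →
      ∀ p l, ETAt opArU (Cf C) p l ↔ (p = [] ∧ l = none)) := by
  refine ⟨ucTy_Cf hC, fun n hn p l => ?_, fun hdiv p l => ?_⟩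
  · exact (countsTo_Cf hC hn).etAt_iff
  · exact etAt_iff_of_hDiverges (hDiverges_Cf hC hdiv)
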